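/- Let T : ℕ → ℕ → ℝ satisfy T(n,0) = 0 for all n, T(0,q) = 0 for all q, and, for all n ≥ 1 and q ≥ 1, the symmetric recurrence T(n,q) = n + (1/(n(q+1))) · Σ_{j=0}^{n-1} Σ_{k=0}^{q} ( T(j,k) + T(n−j−1, q−k) ). Then for all n and q, T(n,q) ≤ 2·n·H_q, where H_q is the q-th harmonic number. -/

import Mathlib

/-!
Reflecting `j ↦ n - 1 - j` and `k ↦ q - k` turns the double sum into `2 ∑ T j k`. Inserting the
bound `T j k ≤ 2 j H_k` (strong induction on `n`) and using `∑_{k ≤ q} H_k = (q + 1) H_q - q` gives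
`T n q ≤ n + 2 (n - 1) (H_q - q / (q + 1))`. For `q ≥ 1` one has `q / (q + 1) ≥ 1 / 2` and
`H_q ≥ 1`, so the right-hand side is at most `2 n H_q`.
-/

/-- The q-th harmonic number `H_q = ∑_{i=1}^{q} 1/i` (with `H_0 = 0`), as a real number. -/
noncomputable def harmonicNum (q : ℕ) : ℝ := ∑ i ∈ Finset.range q, (1 : ℝ) / (i + 1)

lemma sum_harmonicNum (q : ℕ) :
    ∑ k ∈ Finset.range (q + 1), harmonicNum k = (q + 1) * harmonicNum q - q := by
  induction q with
  | zero => simp [harmonicNum]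
  | succ q ih =>
    have h : harmonicNum (q + 1) = harmonicNum q + 1 / ((q : ℝ) + 1) := by
      simp [harmonicNum, Finset.sum_range_succ]
    rw [Finset.sum_range_succ, ih, h]
    have : (q : ℝ) + 1 ≠ 0 := by positivity
    push_cast
    field_simp
    ring

lemma one_le_harmonicNum {q : ℕ} (hq : 1 ≤ q) : 1 ≤ harmonicNum q := by
  have h := Finset.single_le_sum (f := fun i : ℕ => (1 : ℝ) / (i + 1)) (s := Finset.range q)
    (fun i _ => by positivity) (Finset.mem_range.2 hq)
  simpa [harmonicNum] using h

lemma sum_cast_range (n : ℕ) : ∑ j ∈ Finset.range n, (j : ℝ) = n * (n - 1) / 2 := by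
  induction n with
  | zero => simp
  | succ n ih =>
    rw [Finset.sum_range_succ, ih]
    push_cast
    ring

/-- Reflecting both indices shows that the two halves of the recurrence contribute equally. -/
lemma sum_symm (T : ℕ → ℕ → ℝ) (n q : ℕ) :
    ∑ j ∈ Finset.range n, ∑ k ∈ Finset.range (q + 1), (T j k + T (n - j - 1) (q - k)) =
      2 * ∑ j ∈ Finset.range n, ∑ k ∈ Finset.range (q + 1), T j k := by
  have hk : ∀ m, ∑ k ∈ Finset.range (q + 1), T m (q - k) =
      ∑ k ∈ Finset.range (q + 1), T m k := fun m => by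
    simpa using Finset.sum_range_reflect (fun k => T m k) (q + 1)
  have hj := Finset.sum_range_reflect (fun j => ∑ k ∈ Finset.range (q + 1), T j k) n
  simp only [Finset.sum_add_distrib, hk, Nat.sub_right_comm n _ 1]
  rw [hj]
  ring

theorem stmt_1 (T : ℕ → ℕ → ℝ)
    (hT0 : ∀ n, T n 0 = 0)
    (hT0' : ∀ q, T 0 q = 0)
    (hrec : ∀ n q, 1 ≤ n → 1 ≤ q →
      T n q = n + (1 / ((n : ℝ) * ((q : ℝ) + 1))) *
        ∑ j ∈ Finset.range n, ∑ k ∈ Finset.range (q + 1),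
          (T j k + T (n - j - 1) (q - k))) :
    ∀ n q, T n q ≤ 2 * (n : ℝ) * harmonicNum q := by
  intro n
  induction n using Nat.strong_induction_on with
  | _ n ih =>
  intro q
  rcases Nat.eq_zero_or_pos n with rfl | hn
  · simp [hT0']
  rcases Nat.eq_zero_or_pos q with rfl | hq
  · simp [hT0, harmonicNum]
  have hS : ∑ j ∈ Finset.range n, ∑ k ∈ Finset.range (q + 1), T j k ≤
      n * (n - 1) * ((q + 1) * harmonicNum q - q) := by
    calc _ ≤ ∑ j ∈ Finset.range n, ∑ k ∈ Finset.range (q + 1), 2 * (j : ℝ) * harmonicNum k :=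
          Finset.sum_le_sum fun j hj => Finset.sum_le_sum fun k _ =>
            ih j (Finset.mem_range.1 hj) k
      _ = _ := by
          simp only [← Finset.mul_sum, ← Finset.sum_mul, sum_harmonicNum, sum_cast_range]
          ring
  have hn' : (1 : ℝ) ≤ n := by exact_mod_cast hn
  have hq' : (1 : ℝ) ≤ q := by exact_mod_cast hq
  have hH := one_le_harmonicNum hq
  have hfrac : (1 : ℝ) / 2 ≤ q / (q + 1) := by
    rw [div_le_div_iff₀ (by norm_num) (by positivity)]
    linarith
  rw [hrec n q hn hq, sum_symm]
  calc _ ≤ (n : ℝ) + 1 / ((n : ℝ) * (q + 1)) *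
        (2 * (n * (n - 1) * ((q + 1) * harmonicNum q - q))) := by gcongr
    _ = n + 2 * (n - 1) * (harmonicNum q - q / (q + 1)) := by
        field_simp
    _ ≤ _ := by
        nlinarith [mul_le_mul_of_nonneg_left hfrac (sub_nonneg.2 hn')]
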